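/- arXiv:2103.07547 — 2 statements merged into one kernel-verified Lean document; each statement's English description precedes it below -/
import Mathlib

section
/- Let q be a power of 2, let n, m be positive integers with n | m, and let σ : x ↦ x^{q^s} with gcd(s,m)=1. Let 𝒞 be a set of σ-linearized polynomials over F_{q^m}, let β ∈ F_{q^m}^*, let α_1,…,α_n be an F_q-basis of βF_{q^n}, let C = {(g(α_1),…,g(α_n)) : g ∈ 𝒞} ⊆ F_{q^m}^n, and let d be its minimum rank distance. Suppose there is a positive integer t such that: (1) n−d+1 ≤ t ≤ n−⌊(d−1)/2⌋−1; (2) t is a power of 2; (3) n = t² − 1; (4) { a x^{σ^j} + b x^{σ^{j+1}} : a, b ∈ F_{q^m} } ⊆ 𝒞 for some integer j with 0 ≤ j < n−t. Then there exists a word w ∈ F_{q^m}^n ∖ C such that |C ∩ B_{n−t}(w)| ≥ (q^n−1)/(q−1). -/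
/-- Rank weight of a vector `v ∈ K^n` over `F_q`. -/
noncomputable def rkw (Fq : Type) [Field Fq] {K : Type} [Field K] [Algebra Fq K] {n : ℕ}
    (v : Fin n → K) : ℕ :=
  Module.finrank Fq ↥(Submodule.span Fq (Set.range v))

/-- Ball of radius `t` around `w` in the rank metric. -/
def ball (Fq : Type) [Field Fq] {K : Type} [Field K] [Algebra Fq K] {n : ℕ}
    (w : Fin n → K) (t : ℕ) : Set (Fin n → K) :=
  {c : Fin n → K | rkw Fq (w - c) ≤ t}

/-- Minimum rank distance of a code `C ⊆ K^n`. -/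
noncomputable def minDist (Fq : Type) [Field Fq] {K : Type} [Field K] [Algebra Fq K] {n : ℕ}
    (C : Set (Fin n → K)) : ℕ :=
  sInf {r : ℕ | ∃ u ∈ C, ∃ v ∈ C, u ≠ v ∧ rkw Fq (u - v) = r}

/-!
Write `f = X ^ t + a X + b` and suppose that `f` divides `X ^ n - 1`. On `E = F_{q^n}` the
automorphism `σ` has a cyclic vector (normal basis theorem) and `σ ^ n = 1`, so `f(σ)` has rank at
most `n - t` on `E`. For every nonzero `μ ∈ β E`, the map `x ↦ σ ^ t (μ) * f(σ)(x / μ)` therefore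
has rank at most `n - t` on `β E = μ E`; it is monic in `σ`, so it is the difference of `σ ^ t` and
some binomial `A x + B σ(x)`. Composing with `σ ^ j`, the word `(σ ^ (j + t) (α i))ᵢ` has a
codeword at distance at most `n - t` for each `μ`. If `a` and `b` are nonzero, the codewords of `μ`
and `ν` agree only when `σ (μ / ν) = μ / ν`, so they are parametrised by the projective space of
`β E`, which has `(q ^ n - 1) / (q - 1)` points. Two distinct codewords at distance less than `d`
keep the word itself out of the code.

In characteristic `p` and for `t` a power of `p`, the trinomial `g = X ^ t + X + 1` divides
`g ^ t - g = X ^ (t ^ 2) - X`, hence also `X ^ (t ^ 2 - 1) - 1`.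
-/

section

open Polynomial LinearAlgebra.Projectivization

section Trinomial

theorem X_pow_add_X_add_one_dvd_X_pow_sq_sub_X (R : Type*) [CommRing R] (p e : ℕ) [ExpChar R p] :
    (X ^ p ^ e + X + 1 : R[X]) ∣ X ^ (p ^ e) ^ 2 - X := by
  have frobenius_sub_self : (X ^ (p ^ e) ^ 2 - X : R[X]) =
      (X ^ p ^ e + X + 1) ^ p ^ e - (X ^ p ^ e + X + 1) := by
    rw [add_pow_expChar_pow, add_pow_expChar_pow, one_pow, sq, pow_mul]
    ring
  rw [frobenius_sub_self]
  exact dvd_sub (dvd_pow_self _ (pow_pos (expChar_pos R p) e).ne') dvd_rfl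

theorem X_pow_add_X_add_one_dvd_X_pow_sq_sub_one (R : Type*) [CommRing R] (p e : ℕ) [ExpChar R p] :
    (X ^ p ^ e + X + 1 : R[X]) ∣ X ^ ((p ^ e) ^ 2 - 1) - 1 := by
  have ht : 0 < p ^ e := pow_pos (expChar_pos R p) e
  have hcop : IsCoprime (X ^ p ^ e + X + 1 : R[X]) X := by
    refine ⟨1, -(X ^ (p ^ e - 1) + 1), ?_⟩
    linear_combination -pow_sub_one_mul ht.ne' (X : R[X])
  refine hcop.dvd_of_dvd_mul_left ?_
  rw [mul_sub, mul_one, mul_pow_sub_one (pow_pos ht 2).ne']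
  exact X_pow_add_X_add_one_dvd_X_pow_sq_sub_X R p e

theorem natDegree_X_pow_add_C_mul_X_add_C {R : Type*} [Semiring R] [Nontrivial R] {t : ℕ}
    (ht : 1 < t) (a b : R) : (X ^ t + C a * X + C b).natDegree = t := by
  rw [add_assoc, natDegree_add_eq_left_of_natDegree_lt, natDegree_X_pow]
  exact natDegree_linear_le.trans_lt (by rwa [natDegree_X_pow])

end Trinomial

section CyclicVector

theorem finrank_map_aeval_le_natDegree {F V : Type*} [Field F] [AddCommGroup V] [Module F V]
    (T : Module.End F V) {W : Submodule F V} {b : V} (hW : ∀ x ∈ W, ∃ p : F[X], aeval T p b = x)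
    {g h : F[X]} (hh : h ≠ 0) (hgh : aeval T (g * h) b = 0) :
    Module.finrank F (W.map (aeval T g)) ≤ h.natDegree := by
  let ψ : degreeLT F h.natDegree →ₗ[F] V :=
    LinearMap.applyₗ b ∘ₗ (aeval T).toLinearMap ∘ₗ LinearMap.mulLeft F g ∘ₗ
      (degreeLT F h.natDegree).subtype
  have : Module.Finite F (degreeLT F h.natDegree) :=
    Module.Finite.equiv (degreeLTEquiv F h.natDegree).symm
  have hle : W.map (aeval T g) ≤ LinearMap.range ψ := by
    rintro _ ⟨x, hx, rfl⟩
    obtain ⟨p, rfl⟩ := hW x hx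
    have hmod : p % h ∈ degreeLT F h.natDegree := by
      rw [mem_degreeLT, ← degree_eq_natDegree hh]
      exact EuclideanDomain.mod_lt p hh
    have hp : g * p = p / h * (g * h) + g * (p % h) := by
      linear_combination -g * EuclideanDomain.div_add_mod p h
    refine ⟨⟨p % h, hmod⟩, ?_⟩
    change aeval T (g * (p % h)) b = aeval T g (aeval T p b)
    rw [← Module.End.mul_apply, ← map_mul, hp, map_add, map_mul _ (p / h), LinearMap.add_apply,
      Module.End.mul_apply, hgh, map_zero, zero_add]
  calc Module.finrank F (W.map (aeval T g))
      ≤ Module.finrank F (LinearMap.range ψ) := Submodule.finrank_mono hle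
    _ ≤ Module.finrank F (degreeLT F h.natDegree) := LinearMap.finrank_range_le ψ
    _ = h.natDegree := by simp [(degreeLTEquiv F h.natDegree).finrank_eq]

variable {F K : Type*} [Field F] [Field K] [Algebra F K]

theorem aeval_toLinearMap_X_pow_apply (σ : Gal(K/F)) (k : ℕ) (x : K) :
    aeval σ.toLinearMap (X ^ k : F[X]) x = (σ ^ k) x := by
  rw [aeval_X_pow, Module.End.coe_pow, AlgEquiv.coe_pow]
  rfl

theorem coe_restrictNormal_pow_apply (σ : Gal(K/F)) {E : IntermediateField F K} [Normal F E]
    (k : ℕ) (x : E) :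
    (((σ.restrictNormal E ^ k) x : E) : K) = (σ ^ k) x := by
  have hpow : (σ ^ k).restrictNormal E = σ.restrictNormal E ^ k :=
    map_pow (AlgEquiv.restrictNormalHom E) σ k
  rw [← hpow]
  exact AlgEquiv.restrictNormal_commutes (σ ^ k) E x

variable {σ : Gal(K/F)} {E : IntermediateField F K} [FiniteDimensional F E] [IsGalois F E]
  (hσ : Subgroup.zpowers (σ.restrictNormal E) = ⊤)
include hσ

theorem pow_finrank_apply_of_mem {x : K} (hx : x ∈ E) : (σ ^ Module.finrank F E) x = x := by
  have horder : orderOf (σ.restrictNormal E) = Module.finrank F E := by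
    rw [orderOf_eq_card_of_zpowers_eq_top hσ, IsGalois.card_aut_eq_finrank]
  rw [← horder, ← coe_restrictNormal_pow_apply σ _ ⟨x, hx⟩, pow_orderOf_eq_one, AlgEquiv.one_apply]

theorem exists_algebraMap_eq_of_apply_eq {x : K} (hx : x ∈ E) (hfix : σ x = x) :
    ∃ c : F, algebraMap F K c = x := by
  have hmem : (⟨x, hx⟩ : E) ∈ Set.range (algebraMap F E) := by
    rw [IsGalois.mem_range_algebraMap_iff_fixed]
    have hstab : Subgroup.zpowers (σ.restrictNormal E) ≤
        MulAction.stabilizer Gal(E/F) (⟨x, hx⟩ : E) := by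
      rw [Subgroup.zpowers_le]
      exact Subtype.ext ((AlgEquiv.restrictNormal_commutes σ E ⟨x, hx⟩).trans hfix)
    exact fun g => hstab (hσ ▸ Subgroup.mem_top g)
  obtain ⟨c, hc⟩ := hmem
  exact ⟨c, congrArg Subtype.val hc⟩

theorem exists_cyclic_vector :
    ∃ b ∈ E, ∀ x ∈ E, ∃ p : F[X], aeval σ.toLinearMap p b = x := by
  let B := IsGalois.normalBasis F E
  refine ⟨B 1, (B 1).2, fun x hx => ?_⟩
  have hgen (g : Gal(E/F)) : ∃ i : ℕ, σ.restrictNormal E ^ i = g := by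
    rw [← Submonoid.mem_powers_iff, mem_powers_iff_mem_zpowers, hσ]
    exact Subgroup.mem_top g
  choose i hi using hgen
  have hB (g : Gal(E/F)) : (B g : K) = (σ ^ i g) (B 1) := by
    rw [← coe_restrictNormal_pow_apply, hi, ← IsGalois.normalBasis_apply]
  refine ⟨∑ g, C (B.repr ⟨x, hx⟩ g) * X ^ i g, ?_⟩
  calc aeval σ.toLinearMap (∑ g, C (B.repr ⟨x, hx⟩ g) * X ^ i g) (B 1 : K)
      = ∑ g, B.repr ⟨x, hx⟩ g • (B g : K) := by
        simp only [map_sum, map_mul, aeval_C, LinearMap.sum_apply, Module.End.mul_apply,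
          aeval_toLinearMap_X_pow_apply, ← hB, Module.algebraMap_end_apply]
    _ = x := by
        simpa only [map_sum, map_smul, IntermediateField.coe_val] using
          congrArg E.val (B.sum_repr ⟨x, hx⟩)

theorem finrank_map_aeval_le_of_dvd {f : F[X]} (hf : f ∣ X ^ Module.finrank F E - 1) :
    Module.finrank F ((Subalgebra.toSubmodule E.toSubalgebra).map (aeval σ.toLinearMap f)) ≤
      Module.finrank F E - f.natDegree := by
  obtain ⟨h, hfh⟩ := hf
  obtain ⟨b, hbE, hb⟩ := exists_cyclic_vector hσ
  have hne : (X ^ Module.finrank F E - 1 : F[X]) ≠ 0 :=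
    X_pow_sub_C_ne_zero Module.finrank_pos 1
  rw [hfh, mul_ne_zero_iff] at hne
  have hdeg : Module.finrank F E = f.natDegree + h.natDegree := by
    rw [← natDegree_mul hne.1 hne.2, ← hfh]
    exact (natDegree_X_pow_sub_C (r := (1 : F))).symm
  have hann : aeval σ.toLinearMap (f * h) b = 0 := by
    rw [← hfh, map_sub, map_one, LinearMap.sub_apply, aeval_toLinearMap_X_pow_apply,
      pow_finrank_apply_of_mem hσ hbE, Module.End.one_apply, sub_self]
  rw [hdeg, Nat.add_sub_cancel_left]
  exact finrank_map_aeval_le_natDegree _ hb hne.2 hann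

end CyclicVector

section ListOfCodewords

variable {F K : Type*} [Field F] [Field K] [Algebra F K]

/-- For `μ ≠ 0`, the remainder `A x + B σ(x)` of `σ ^ t` modulo the monic skew polynomial
`σ ^ t + B' σ + A'` that is proportional to `x ↦ f(σ)(x / μ)`, where `f = X ^ t + a X + b`.
It agrees with `σ ^ t` exactly on `μ * ker f(σ)`. -/
noncomputable def trinomialRemainder (σ : Gal(K/F)) (t : ℕ) (a b : F) (μ : K) : K →ₗ[F] K :=
  LinearMap.mulLeft F (-(b • ((σ ^ t) μ / μ))) +
    LinearMap.mulLeft F (-(a • ((σ ^ t) μ / σ μ))) ∘ₗ σ.toLinearMap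

theorem trinomialRemainder_apply (σ : Gal(K/F)) (t : ℕ) (a b : F) (μ x : K) :
    trinomialRemainder σ t a b μ x =
      -(b • ((σ ^ t) μ / μ)) * x + -(a • ((σ ^ t) μ / σ μ)) * σ x :=
  rfl

theorem pow_apply_sub_trinomialRemainder_apply (σ : Gal(K/F)) (t : ℕ) (a b : F) {μ : K}
    (hμ : μ ≠ 0) (x : K) :
    (σ ^ t) x - trinomialRemainder σ t a b μ x =
      (σ ^ t) μ * aeval σ.toLinearMap (X ^ t + C a * X + C b) (x / μ) := by
  have hσμ : σ μ ≠ 0 := (map_ne_zero σ).2 hμ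
  have hσtμ : (σ ^ t) μ ≠ 0 := (map_ne_zero (σ ^ t)).2 hμ
  have haeval : aeval σ.toLinearMap (X ^ t + C a * X + C b) (x / μ) =
      (σ ^ t) (x / μ) + a • σ (x / μ) + b • (x / μ) := by
    simp only [map_add, map_mul, aeval_C, aeval_X, LinearMap.add_apply, Module.End.mul_apply,
      aeval_toLinearMap_X_pow_apply, Module.algebraMap_end_apply, AlgEquiv.toLinearMap_apply]
  rw [haeval, trinomialRemainder_apply, map_div₀, map_div₀]
  simp only [Algebra.smul_def]
  field_simp
  ring

variable {σ : Gal(K/F)} {E : IntermediateField F K} [FiniteDimensional F E] [IsGalois F E]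
  (hσ : Subgroup.zpowers (σ.restrictNormal E) = ⊤)
include hσ

theorem exists_mem_apply_ne_of_one_lt_finrank (hE : 1 < Module.finrank F E) : ∃ z ∈ E, σ z ≠ z := by
  by_contra! hfix
  have hbot : E = ⊥ := le_bot_iff.1 fun z hz =>
    IntermediateField.mem_bot.2 (exists_algebraMap_eq_of_apply_eq hσ hz (hfix z hz))
  rw [hbot, IntermediateField.finrank_bot] at hE
  exact lt_irrefl 1 hE

theorem coeff_eq_zero_of_forall_mul_add_mul_apply_eq_zero (hE : 1 < Module.finrank F E) {A B : K}
    (h : ∀ z ∈ E, A * z + B * σ z = 0) : A = 0 ∧ B = 0 := by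
  obtain ⟨z, hz, hσz⟩ := exists_mem_apply_ne_of_one_lt_finrank hσ hE
  have h_one : A + B = 0 := by simpa only [map_one, mul_one] using h 1 E.one_mem
  have hB : B * (σ z - z) = 0 := by linear_combination h z hz - z * h_one
  have hB_zero : B = 0 := (mul_eq_zero.1 hB).resolve_right (sub_ne_zero.2 hσz)
  exact ⟨by rwa [hB_zero, add_zero] at h_one, hB_zero⟩

theorem exists_algebraMap_eq_div_of_trinomialRemainder_eq (hE : 1 < Module.finrank F E) {t : ℕ}
    {a b : F} (ha : a ≠ 0) (hb : b ≠ 0) {μ ν : K} (hμ : μ ≠ 0) (hν : ν ≠ 0) (hμν : μ / ν ∈ E)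
    (h : ∀ z ∈ E, trinomialRemainder σ t a b μ (ν * z) = trinomialRemainder σ t a b ν (ν * z)) :
    ∃ c : F, algebraMap F K c = μ / ν := by
  have hσμ : σ μ ≠ 0 := (map_ne_zero σ).2 hμ
  have hσν : σ ν ≠ 0 := (map_ne_zero σ).2 hν
  have hσtν : (σ ^ t) ν ≠ 0 := (map_ne_zero (σ ^ t)).2 hν
  obtain ⟨hA, hB⟩ := coeff_eq_zero_of_forall_mul_add_mul_apply_eq_zero hσ hE
    (A := b • ((σ ^ t) μ / μ - (σ ^ t) ν / ν) * ν)
    (B := a • ((σ ^ t) μ / σ μ - (σ ^ t) ν / σ ν) * σ ν) fun z hz => by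
      have hz_eq := h z hz
      simp only [trinomialRemainder_apply, map_mul, Algebra.smul_def] at hz_eq ⊢
      linear_combination -hz_eq
  have hA' : (σ ^ t) μ / μ = (σ ^ t) ν / ν := by simpa [hb, hν, sub_eq_zero] using hA
  have hB' : (σ ^ t) μ / σ μ = (σ ^ t) ν / σ ν := by simpa [ha, hν, sub_eq_zero] using hB
  refine exists_algebraMap_eq_of_apply_eq hσ hμν ?_
  calc σ (μ / ν) = (σ ^ t) (μ / ν) := by
        rw [map_div₀, map_div₀]
        field_simp at hB' ⊢
        exact hB'.symm
    _ = μ / ν := by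
        rw [map_div₀]
        field_simp at hA' ⊢
        exact hA'

end ListOfCodewords

section RankMetric

variable {F K : Type} [Field F] [Field K] [Algebra F K]

theorem notMem_of_one_lt_card_inter_ball {n r : ℕ} {D : Set (Fin n → K)} {w : Fin n → K}
    (hr : r < minDist F D) (hcard : 1 < Nat.card ↥(D ∩ ball F w r)) : w ∉ D := by
  intro hw
  have hsub : (D ∩ ball F w r).Subsingleton := by
    refine Set.subsingleton_of_forall_eq w fun c hc => ?_
    by_contra hcw
    have hdist : minDist F D ≤ rkw F (w - c) := Nat.sInf_le ⟨w, hw, c, hc.1, Ne.symm hcw, rfl⟩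
    exact absurd (hdist.trans hc.2) hr.not_ge
  have := hsub.finite.to_subtype
  rw [Nat.card_coe_set_eq] at hcard
  exact hcard.not_ge (Set.ncard_le_one_iff_subsingleton.2 hsub)

/-- The codeword `(σ ^ j (A α i + B σ (α i)))ᵢ` attached to `μ`, where `A x + B σ(x)` is
`trinomialRemainder σ t a b μ`. These are the codewords close to the word
`(σ ^ (j + t) (α i))ᵢ`. -/
noncomputable def listCodeword {n : ℕ} (σ : Gal(K/F)) (t j : ℕ) (a b : F) (α : Fin n → K) (μ : K) :
    Fin n → K :=
  fun i => (σ ^ j) (trinomialRemainder σ t a b μ (α i))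

theorem listCodeword_mem {n : ℕ} {σ : Gal(K/F)} {j : ℕ} {α : Fin n → K} {D : Set (Fin n → K)}
    (hD : ∀ A B : K, (fun i => A * (σ ^ j) (α i) + B * (σ ^ (j + 1)) (α i)) ∈ D)
    (t : ℕ) (a b : F) (μ : K) : listCodeword σ t j a b α μ ∈ D := by
  have hmem := hD ((σ ^ j) (-(b • ((σ ^ t) μ / μ)))) ((σ ^ j) (-(a • ((σ ^ t) μ / σ μ))))
  have heq : listCodeword σ t j a b α μ = fun i =>
      (σ ^ j) (-(b • ((σ ^ t) μ / μ))) * (σ ^ j) (α i) +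
        (σ ^ j) (-(a • ((σ ^ t) μ / σ μ))) * (σ ^ (j + 1)) (α i) := by
    funext i
    rw [listCodeword, trinomialRemainder_apply, map_add, map_mul, map_mul, pow_succ σ j,
      AlgEquiv.mul_apply]
  rwa [heq]

theorem div_mem_of_coe_eq_image_mul {W : Submodule F K} {E : IntermediateField F K} {β : K}
    (hW : (W : Set K) = (β * ·) '' (E : Set K)) {x y : K} (hx : x ∈ W) (hy : y ∈ W)
    (hy_ne : y ≠ 0) : x / y ∈ E := by
  rw [← SetLike.mem_coe, hW] at hx hy
  obtain ⟨u, hu, rfl⟩ := hx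
  obtain ⟨v, hv, rfl⟩ := hy
  change β * u / (β * v) ∈ E
  rw [mul_div_mul_left _ _ (left_ne_zero_of_mul hy_ne)]
  exact E.div_mem hu hv

theorem mul_mem_of_coe_eq_image_mul {W : Submodule F K} {E : IntermediateField F K} {β : K}
    (hW : (W : Set K) = (β * ·) '' (E : Set K)) {y z : K} (hy : y ∈ W) (hz : z ∈ E) :
    y * z ∈ W := by
  rw [← SetLike.mem_coe, hW] at hy ⊢
  obtain ⟨v, hv, rfl⟩ := hy
  exact ⟨v * z, E.mul_mem hv hz, (mul_assoc β v z).symm⟩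

theorem finrank_eq_of_span_eq_image_mul {n : ℕ} {α : Fin n → K} (hα : LinearIndependent F α)
    {E : IntermediateField F K} {β : K} (hβ : β ≠ 0)
    (hspan : (Submodule.span F (Set.range α) : Set K) = (β * ·) '' (E : Set K)) :
    Module.finrank F E = n := by
  have hmap : (Subalgebra.toSubmodule E.toSubalgebra).map (LinearMap.mulLeft F β) =
      Submodule.span F (Set.range α) :=
    SetLike.coe_injective hspan.symm
  have hequiv := (Submodule.equivMapOfInjective (LinearMap.mulLeft F β)
    (mul_right_injective₀ hβ) (Subalgebra.toSubmodule E.toSubalgebra)).finrank_eq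
  rwa [hmap, finrank_span_eq_card hα, Fintype.card_fin] at hequiv

theorem card_projectivization_span_range [Finite F] {n : ℕ} {α : Fin n → K}
    (hα : LinearIndependent F α) :
    Nat.card (ℙ F (Submodule.span F (Set.range α))) =
      (Nat.card F ^ n - 1) / (Nat.card F - 1) := by
  have : Module.Finite F (Submodule.span F (Set.range α)) :=
    Module.Finite.span_of_finite F (Set.finite_range α)
  rw [Projectivization.card'', Module.natCard_eq_pow_finrank (K := F), finrank_span_eq_card hα,
    Fintype.card_fin]

variable {σ : Gal(K/F)} {E : IntermediateField F K} [FiniteDimensional F E] [IsGalois F E]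
  (hσ : Subgroup.zpowers (σ.restrictNormal E) = ⊤) {t j n : ℕ} {a b : F} {α : Fin n → K}
include hσ

theorem rkw_sub_listCodeword_le (ht : 1 < t)
    (hdvd : (X ^ t + C a * X + C b : F[X]) ∣ X ^ Module.finrank F E - 1)
    {μ : K} (hμ : μ ≠ 0) (hα : ∀ i, α i / μ ∈ E) :
    rkw F ((fun i => (σ ^ (j + t)) (α i)) - listCodeword σ t j a b α μ) ≤
      Module.finrank F E - t := by
  let f : F[X] := X ^ t + C a * X + C b
  let L : K →ₗ[F] K := (σ ^ j).toLinearMap ∘ₗ LinearMap.mulLeft F ((σ ^ t) μ)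
  let V := (Subalgebra.toSubmodule E.toSubalgebra).map (aeval σ.toLinearMap f)
  have : FiniteDimensional F (Subalgebra.toSubmodule E.toSubalgebra) := ‹FiniteDimensional F E›
  have hle : Submodule.span F (Set.range
      ((fun i => (σ ^ (j + t)) (α i)) - listCodeword σ t j a b α μ)) ≤ V.map L := by
    rw [Submodule.span_le]
    rintro _ ⟨i, rfl⟩
    refine ⟨_, ⟨α i / μ, hα i, rfl⟩, ?_⟩
    change (σ ^ j) ((σ ^ t) μ * aeval σ.toLinearMap f (α i / μ)) = _
    rw [← pow_apply_sub_trinomialRemainder_apply σ t a b hμ, map_sub, Pi.sub_apply, pow_add,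
      AlgEquiv.mul_apply, listCodeword]
  calc rkw F ((fun i => (σ ^ (j + t)) (α i)) - listCodeword σ t j a b α μ)
      ≤ Module.finrank F (V.map L) := Submodule.finrank_mono hle
    _ ≤ Module.finrank F V := Submodule.finrank_map_le L V
    _ ≤ Module.finrank F E - f.natDegree := finrank_map_aeval_le_of_dvd hσ hdvd
    _ = Module.finrank F E - t := by rw [natDegree_X_pow_add_C_mul_X_add_C ht]

variable (hE : 1 < Module.finrank F E) (ha : a ≠ 0) (hb : b ≠ 0) {β : K}
  (hspan : (Submodule.span F (Set.range α) : Set K) = (β * ·) '' (E : Set K))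
include hE ha hb hspan

theorem exists_smul_eq_of_listCodeword_eq {μ ν : K} (hμ : μ ∈ Submodule.span F (Set.range α))
    (hν : ν ∈ Submodule.span F (Set.range α)) (hμ_ne : μ ≠ 0) (hν_ne : ν ≠ 0)
    (h : listCodeword σ t j a b α μ = listCodeword σ t j a b α ν) : ∃ c : F, c • ν = μ := by
  have heq : Set.EqOn (trinomialRemainder σ t a b μ) (trinomialRemainder σ t a b ν)
      (Submodule.span F (Set.range α)) := by
    refine LinearMap.eqOn_span ?_
    rintro _ ⟨i, rfl⟩
    exact (σ ^ j).injective (congrFun h i)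
  obtain ⟨c, hc⟩ := exists_algebraMap_eq_div_of_trinomialRemainder_eq hσ hE ha hb hμ_ne hν_ne
    (div_mem_of_coe_eq_image_mul hspan hμ hν hν_ne)
    fun z hz => heq (mul_mem_of_coe_eq_image_mul hspan hν hz)
  exact ⟨c, by rw [Algebra.smul_def, hc, div_mul_cancel₀ _ hν_ne]⟩

theorem card_projectivization_le_card_inter_ball [Finite K] (ht : 1 < t)
    (hdvd : (X ^ t + C a * X + C b : F[X]) ∣ X ^ Module.finrank F E - 1)
    {D : Set (Fin n → K)}
    (hD : ∀ A B : K, (fun i => A * (σ ^ j) (α i) + B * (σ ^ (j + 1)) (α i)) ∈ D) :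
    Nat.card (ℙ F (Submodule.span F (Set.range α))) ≤
      Nat.card ↥(D ∩ ball F (fun i => (σ ^ (j + t)) (α i)) (Module.finrank F E - t)) := by
  have hrep (P : ℙ F (Submodule.span F (Set.range α))) : (P.rep : K) ≠ 0 :=
    fun h => P.rep_nonzero (Subtype.ext h)
  have hball (P : ℙ F (Submodule.span F (Set.range α))) : listCodeword σ t j a b α P.rep ∈
      ball F (fun i => (σ ^ (j + t)) (α i)) (Module.finrank F E - t) :=
    rkw_sub_listCodeword_le hσ ht hdvd (hrep P) fun i =>
      div_mem_of_coe_eq_image_mul hspan (Submodule.subset_span ⟨i, rfl⟩) P.rep.2 (hrep P)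
  refine Nat.card_le_card_of_injective
    (fun P => ⟨listCodeword σ t j a b α P.rep, listCodeword_mem hD t a b P.rep, hball P⟩)
    fun P Q hPQ => ?_
  obtain ⟨c, hc⟩ := exists_smul_eq_of_listCodeword_eq hσ hE ha hb hspan P.rep.2 Q.rep.2
    (hrep P) (hrep Q) (congrArg Subtype.val hPQ)
  rw [← P.mk_rep, ← Q.mk_rep, Projectivization.mk_eq_mk_iff']
  exact ⟨c, Subtype.ext hc⟩

end RankMetric

section FiniteField

open FiniteField

variable (F : Type*) {K : Type*} [Field F] [Fintype F] [Field K] [Algebra F K]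

theorem frobenius_pow_apply [Algebra.IsAlgebraic F K] (k : ℕ) (x : K) :
    (frobeniusAlgEquivOfAlgebraic F K ^ k) x = x ^ Fintype.card F ^ k := by
  rw [AlgEquiv.coe_pow, coe_frobeniusAlgEquivOfAlgebraic_iterate]

theorem exists_intermediateField_mem_iff_pow_eq [Algebra.IsAlgebraic F K] (n : ℕ) :
    ∃ E : IntermediateField F K, ∀ x, x ∈ E ↔ x ^ Fintype.card F ^ n = x := by
  refine ⟨IntermediateField.fixedField
    (Subgroup.zpowers (frobeniusAlgEquivOfAlgebraic F K ^ n)), fun x => ?_⟩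
  rw [IntermediateField.mem_fixedField_iff, ← frobenius_pow_apply]
  change Subgroup.zpowers _ ≤ MulAction.stabilizer Gal(K/F) x ↔ _
  rw [Subgroup.zpowers_le, MulAction.mem_stabilizer_iff, AlgEquiv.smul_def]

theorem zpowers_restrictNormal_frobenius_pow_eq_top [Finite K] (E : IntermediateField F K) {s : ℕ}
    (hs : s.Coprime (Module.finrank F E)) :
    Subgroup.zpowers ((frobeniusAlgEquivOfAlgebraic F K ^ s).restrictNormal E) = ⊤ := by
  have hrestrict : (frobeniusAlgEquivOfAlgebraic F K ^ s).restrictNormal E =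
      frobeniusAlgEquivOfAlgebraic F E ^ s := by
    ext x
    refine (AlgEquiv.restrictNormal_commutes _ E x).trans ?_
    rw [frobenius_pow_apply, frobenius_pow_apply]
    rfl
  have horder := orderOf_frobeniusAlgEquivOfAlgebraic F E
  refine Subgroup.eq_top_of_card_eq _ ?_
  rw [Nat.card_zpowers, hrestrict, Nat.Coprime.orderOf_pow (by rw [horder]; exact hs.symm), horder,
    IsGalois.card_aut_eq_finrank]

end FiniteField

theorem one_lt_pow_sub_one_div {q n : ℕ} (hq : 1 < q) (hn : 1 < n) :
    1 < (q ^ n - 1) / (q - 1) := by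
  refine hq.trans_le ((Nat.le_div_iff_mul_le (Nat.sub_pos_of_lt hq)).2 ?_)
  calc q * (q - 1) = q ^ 2 - q := by rw [Nat.mul_sub, mul_one, sq]
    _ ≤ q ^ n - 1 := tsub_le_tsub (Nat.pow_le_pow_right (Nat.zero_lt_of_lt hq) hn) hq.le

theorem stmt_15_general (q s n t j : ℕ) (Fq K : Type) [Field Fq] [Fintype Fq] [Field K] [Finite K]
    [Algebra Fq K] (hcard : Fintype.card Fq = q) (hs : s.Coprime n) (𝒞 : Set (K → K))
    (β : K) (hβ : β ≠ 0) (α : Fin n → K) (hα : LinearIndependent Fq α)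
    (hspan : (Submodule.span Fq (Set.range α) : Set K)
      = (fun y : K => β * y) '' {x : K | x ^ q ^ n = x})
    (a b : Fq) (ha : a ≠ 0) (hb : b ≠ 0) (ht : 1 < t)
    (hdvd : (X ^ t + C a * X + C b : Fq[X]) ∣ X ^ n - 1)
    (D : Set (Fin n → K)) (hD : D = (fun g : K → K => fun i : Fin n => g (α i)) '' 𝒞)
    (hdist : n - t < minDist Fq D)
    (hbinom : {f : K → K | ∃ A B : K, ∀ x : K,
        f x = A * x ^ ((q ^ s) ^ j) + B * x ^ ((q ^ s) ^ (j + 1))} ⊆ 𝒞) :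
    ∃ w : Fin n → K, w ∉ D ∧
      (q ^ n - 1) / (q - 1) ≤ Nat.card ↥(D ∩ ball Fq w (n - t)) := by
  subst hcard
  let σ : Gal(K/Fq) := FiniteField.frobeniusAlgEquivOfAlgebraic Fq K ^ s
  have hσ_pow (k : ℕ) (x : K) : (σ ^ k) x = x ^ (Fintype.card Fq ^ s) ^ k := by
    rw [← pow_mul, frobenius_pow_apply, pow_mul]
  have hD_mem (A B : K) : (fun i => A * (σ ^ j) (α i) + B * (σ ^ (j + 1)) (α i)) ∈ D := by
    rw [hD]
    exact ⟨_, hbinom ⟨A, B, fun x => rfl⟩, by simp only [hσ_pow]⟩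
  obtain ⟨E, hE⟩ := exists_intermediateField_mem_iff_pow_eq Fq (K := K) n
  have hspanE : (Submodule.span Fq (Set.range α) : Set K) = (β * ·) '' (E : Set K) :=
    hspan.trans (congrArg _ (Set.ext fun x => (hE x).symm))
  have hEn : Module.finrank Fq E = n := finrank_eq_of_span_eq_image_mul hα hβ hspanE
  have hn : 1 < n := by
    have hn_pos : 0 < n := hEn ▸ Module.finrank_pos
    have hdeg := natDegree_le_of_dvd hdvd (X_pow_sub_C_ne_zero hn_pos 1)
    rw [natDegree_X_pow_add_C_mul_X_add_C ht, ← C_1, natDegree_X_pow_sub_C] at hdeg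
    exact ht.trans_le hdeg
  have hlist := card_projectivization_le_card_inter_ball (σ := σ)
    (zpowers_restrictNormal_frobenius_pow_eq_top Fq E (hEn.symm ▸ hs)) (hEn.symm ▸ hn) ha hb hspanE
    ht (hEn.symm ▸ hdvd) hD_mem
  rw [card_projectivization_span_range hα, hEn, Nat.card_eq_fintype_card] at hlist
  have hlist_one := (one_lt_pow_sub_one_div Fintype.one_lt_card hn).trans_le hlist
  exact ⟨_, notMem_of_one_lt_card_inter_ball hdist hlist_one, hlist⟩

end

/-- with `q` a power of `2`, `t` a power of `2`, `n = t²−1`, and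
`{a x^{σ^j} + b x^{σ^{j+1}} : a,b} ⊆ 𝒞` for some `j < n−t`, where
`n−d+1 ≤ t ≤ n−⌊(d−1)/2⌋−1`, there is a word `w ∉ C` with
`|C ∩ B_{n−t}(w)| ≥ (q^n−1)/(q−1)`. -/
theorem stmt_15 (q s n m t j : ℕ) (Fq K : Type) [Field Fq] [Fintype Fq] [Field K]
    [Fintype K] [Algebra Fq K]
    (hq2 : ∃ e : ℕ, 0 < e ∧ q = 2 ^ e)
    (hcard : Fintype.card Fq = q) (hfin : Module.finrank Fq K = m)
    (hn : 0 < n) (hnm : n ∣ m) (hs : Nat.gcd s m = 1)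
    (𝒞 : Set (K → K))
    (hlin : ∀ f ∈ 𝒞, ∃ N : ℕ, ∃ a : Fin N → K, ∀ x : K,
      f x = ∑ i : Fin N, a i * x ^ ((q ^ s) ^ (i : ℕ)))
    (β : K) (hβ : β ≠ 0)
    (α : Fin n → K) (hα : LinearIndependent Fq α)
    (hspan : (Submodule.span Fq (Set.range α) : Set K)
      = (fun y : K => β * y) '' {x : K | x ^ q ^ n = x})
    (C : Set (Fin n → K)) (hC : C = (fun g : K → K => fun i : Fin n => g (α i)) '' 𝒞)
    (d : ℕ) (hd : d = minDist Fq C)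
    (ht0 : 0 < t)
    (ht1 : (n : ℤ) - d + 1 ≤ (t : ℤ))
    (ht2 : (t : ℤ) ≤ (n : ℤ) - (((d - 1) / 2 : ℕ) : ℤ) - 1)
    (htw : ∃ w : ℕ, t = 2 ^ w)
    (hnt : n = t ^ 2 - 1)
    (hj : (j : ℤ) < (n : ℤ) - (t : ℤ))
    (hGab : {f : K → K | ∃ a b : K, ∀ x : K,
        f x = a * x ^ ((q ^ s) ^ j) + b * x ^ ((q ^ s) ^ (j + 1))} ⊆ 𝒞) :
    ∃ w : Fin n → K, w ∉ C ∧
      (q ^ n - 1) / (q - 1) ≤ Nat.card ↥(C ∩ ball Fq w (n - t)) := by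
  obtain ⟨e, -, hq⟩ := hq2
  obtain ⟨w, rfl⟩ := htw
  have : CharP Fq 2 := charP_of_card_eq_prime_pow (hcard.trans hq)
  have ht : 1 < 2 ^ w := by
    refine lt_of_le_of_ne ht0 fun ht_one => ?_
    rw [hnt, ← ht_one] at hn
    exact absurd hn (by decide)
  exact stmt_15_general q s n (2 ^ w) j Fq K hcard (Nat.Coprime.coprime_dvd_right hnm hs) 𝒞 β hβ α
    hα hspan 1 1 one_ne_zero one_ne_zero ht
    (by simpa [hnt] using X_pow_add_X_add_one_dvd_X_pow_sq_sub_one Fq 2 w) C hC (by omega) hGab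
end

section
/- Let p be a prime, q a power of p, and k ≥ 2, t positive integers. Let q' = p^r for a non-negative integer r, set p_i = 1 + q' + … + q'^i for i ≥ 0, let n = t·p_k, and let m be a multiple of n. Let σ : x ↦ x^{q^s} with gcd(s,m)=1. Let 𝒞 be a set of σ-linearized polynomials over F_{q^m}, let β ∈ F_{q^m}^*, let α_1,…,α_n be an F_q-basis of βF_{q^n}, let C = {(g(α_1),…,g(α_n)) : g ∈ 𝒞} ⊆ F_{q^m}^n, and let d be its minimum rank distance. Suppose: (1) ⌊(d−1)/2⌋ + 1 ≤ t·q'^k ≤ d−1; (2) (𝒢_{n, t·p_{k−2}+1, σ})^{σ^j} = { Σ_{i=j}^{j + t·p_{k−2}} a_i x^{σ^i} : a_i ∈ F_{q^m} } ⊆ 𝒞 for some integer j with 0 ≤ j < t·q'^k. Then there exists a word w ∈ F_{q^m}^n ∖ C such that |C ∩ B_{t·q'^k}(w)| ≥ (q^n−1)/(q^t−1). (Note t·q'^k = n − t·p_{k−1}.) -/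
/-!
In characteristic `p` the polynomial `f = ∑_{l ≤ k} X ^ (t p_{l - 1})` divides `X ^ n - 1`, because
`1 + X ^ t f ^ q' = f + X ^ n`. Hence `f(σ)` sends the fixed field of `σ ^ n` into the kernel of the
cofactor `(X ^ n - 1) / f` evaluated at `σ`, which has dimension at most `n - deg f = t q' ^ k`. The
same holds for `f(σ)` conjugated by multiplication by `u`, as long as `u α_l` stays in that field.
Normalised to have leading term `σ ^ (deg f)`, each conjugate is thus the difference between the
fixed word `σ ^ (deg f) ∘ α` and a codeword, whose remaining exponents are at most `t p_{k - 2}`.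
There are at least `q ^ n - 1` multipliers `u`, and two of them give the same codeword only if their
ratio is fixed by `σ ^ t`, as one sees by comparing the coefficients of `1` and `σ ^ t`.
-/

open Module
open Polynomial hiding map_ne_zero

section SigmaPolynomials

variable {F K : Type*} [Field F] [Field K] [Algebra F K]

/-- The `σ`-polynomial `∑_{i < D} a_i σ ^ i`, as an `F`-linear endomorphism of `K`. Only the first
`D` terms of the coefficient sequence matter. -/
noncomputable def sigmaPoly (σ : K →ₐ[F] K) (D : ℕ) (a : ℕ → K) : K →ₗ[F] K :=
  ∑ i ∈ Finset.range D, a i • (σ ^ i).toLinearMap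

theorem sigmaPoly_apply (σ : K →ₐ[F] K) (D : ℕ) (a : ℕ → K) (x : K) :
    sigmaPoly σ D a x = ∑ i ∈ Finset.range D, a i * (σ ^ i) x := by
  simp [sigmaPoly]

theorem sigmaPoly_sub (σ : K →ₐ[F] K) (D : ℕ) (a b : ℕ → K) :
    sigmaPoly σ D (a - b) = sigmaPoly σ D a - sigmaPoly σ D b := by
  ext x
  simp [sigmaPoly_apply, sub_mul]

theorem sigmaPoly_comp_mulLeft (σ : K →ₐ[F] K) (D : ℕ) (a : ℕ → K) (y : K) :
    sigmaPoly σ D a ∘ₗ LinearMap.mulLeft F y = sigmaPoly σ D fun i => a i * (σ ^ i) y := by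
  ext x
  simp [sigmaPoly_apply, mul_assoc]

theorem toLinearMap_pow_apply (σ : K →ₐ[F] K) (i : ℕ) (x : K) :
    (σ.toLinearMap ^ i) x = (σ ^ i) x := by
  rw [End.coe_pow, AlgHom.coe_pow, AlgHom.coe_toLinearMap]

theorem aeval_toLinearMap_eq_sigmaPoly (σ : K →ₐ[F] K) {g : F[X]} {D : ℕ} (hg : g.natDegree < D) :
    aeval σ.toLinearMap g = sigmaPoly σ D fun i => algebraMap F K (g.coeff i) := by
  ext x
  simp [aeval_eq_sum_range' hg, sigmaPoly_apply, toLinearMap_pow_apply, Algebra.smul_def]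

-- Summation by parts.
theorem sigmaPoly_succ_eq_comp_sub_one (σ : K →ₐ[F] K) {D : ℕ} {a : ℕ → K}
    (ha : ∑ i ∈ Finset.range (D + 1), a i = 0) :
    sigmaPoly σ (D + 1) a =
      sigmaPoly σ D (fun i => -∑ l ∈ Finset.range (i + 1), a l) ∘ₗ (σ.toLinearMap - 1) := by
  ext x
  have hparts := Finset.sum_range_by_parts (fun i => (σ ^ i) x) a (D + 1)
  simp only [smul_eq_mul, add_tsub_cancel_right, ha, mul_zero, zero_sub,
    ← Finset.sum_neg_distrib] at hparts
  rw [sigmaPoly_apply, LinearMap.comp_apply, sigmaPoly_apply]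
  simp_rw [mul_comm (a _), hparts]
  refine Finset.sum_congr rfl fun i _ => ?_
  rw [LinearMap.sub_apply, AlgHom.toLinearMap_apply, End.one_apply, map_sub, ← AlgHom.mul_apply,
    ← pow_succ]
  ring

theorem finrank_ker_sub_one_le {σ : K →ₐ[F] K} (hσ : AlgHom.equalizer σ (.id F K) = ⊥) :
    finrank F (LinearMap.ker (σ.toLinearMap - 1)) ≤ 1 := by
  have hker : LinearMap.ker (σ.toLinearMap - 1) = Subalgebra.toSubmodule (⊥ : Subalgebra F K) := by
    ext x
    rw [← hσ, Subalgebra.mem_toSubmodule, AlgHom.mem_equalizer]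
    simp [sub_eq_zero]
  rw [hker]
  exact Subalgebra.finrank_bot.le

theorem finrank_ker_comp_le {V V' V'' : Type*} [AddCommGroup V] [Module F V] [AddCommGroup V']
    [Module F V'] [AddCommGroup V''] [Module F V''] [FiniteDimensional F V]
    [FiniteDimensional F V'] (g : V' →ₗ[F] V'') (f : V →ₗ[F] V') :
    finrank F (LinearMap.ker (g ∘ₗ f)) ≤
      finrank F (LinearMap.ker g) + finrank F (LinearMap.ker f) := by
  let f' := f.domRestrict (LinearMap.ker (g ∘ₗ f))
  have hrange : finrank F (LinearMap.range f') ≤ finrank F (LinearMap.ker g) := by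
    refine Submodule.finrank_mono ?_
    rintro _ ⟨x, rfl⟩
    exact x.2
  have hker : finrank F (LinearMap.ker f') ≤ finrank F (LinearMap.ker f) := by
    rw [LinearMap.ker_domRestrict, ← Submodule.finrank_map_subtype_eq]
    exact Submodule.finrank_mono (Submodule.map_comap_le _ _)
  have := LinearMap.finrank_range_add_finrank_ker f'
  omega

theorem finrank_ker_comp_mulLeft (φ : K →ₗ[F] K) {y : K} (hy : y ≠ 0) :
    finrank F (LinearMap.ker (φ ∘ₗ LinearMap.mulLeft F y)) = finrank F (LinearMap.ker φ) := by
  let e : K ≃ₗ[F] K := (LinearEquiv.smulOfNeZero K K y hy).restrictScalars F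
  have he : LinearMap.mulLeft F y = e := rfl
  rw [he, LinearMap.ker_comp, Submodule.comap_equiv_eq_map_symm, LinearEquiv.finrank_map_eq]

theorem eq_zero_of_sum_range_succ_eq_zero {M : Type*} [AddCommGroup M] {D : ℕ} {b : ℕ → M}
    (hb : ∀ i ≤ D, ∑ l ∈ Finset.range (i + 1), b l = 0) : ∀ i ≤ D, b i = 0
  | 0, h => by simpa using hb 0 h
  | i + 1, h => by simpa [Finset.sum_range_succ _ (i + 1), hb i (by omega)] using hb (i + 1) h

variable [FiniteDimensional F K] {σ : K →ₐ[F] K}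

-- A nonzero `y` in the kernel splits off a right factor `(σ - 1) ∘ y⁻¹`, whose kernel is the line
-- `F y`.
theorem coeff_eq_zero_of_le_finrank_ker (hσ : AlgHom.equalizer σ (.id F K) = ⊥) {D : ℕ}
    {a : ℕ → K} (hD : D ≤ finrank F (LinearMap.ker (sigmaPoly σ D a))) : ∀ i < D, a i = 0 := by
  induction D generalizing a with
  | zero => exact fun i hi => absurd hi i.not_lt_zero
  | succ D ih =>
    obtain ⟨y, hy, hy0⟩ : ∃ y ∈ LinearMap.ker (sigmaPoly σ (D + 1) a), y ≠ 0 :=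
      Submodule.exists_mem_ne_zero_of_ne_bot fun h => by
        rw [h, finrank_bot] at hD
        omega
    let b : ℕ → K := fun i => a i * (σ ^ i) y
    let B : ℕ → K := fun i => -∑ l ∈ Finset.range (i + 1), b l
    have hb : ∑ l ∈ Finset.range (D + 1), b l = 0 := by
      rw [← LinearMap.mem_ker.1 hy, sigmaPoly_apply]
    have hfactor : sigmaPoly σ (D + 1) a ∘ₗ LinearMap.mulLeft F y =
        sigmaPoly σ D B ∘ₗ (σ.toLinearMap - 1) := by
      rw [sigmaPoly_comp_mulLeft, sigmaPoly_succ_eq_comp_sub_one σ hb]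
    have hrank : D ≤ finrank F (LinearMap.ker (sigmaPoly σ D B)) := by
      have hle := finrank_ker_comp_le (sigmaPoly σ D B) (σ.toLinearMap - 1)
      rw [← hfactor, finrank_ker_comp_mulLeft _ hy0] at hle
      have := finrank_ker_sub_one_le hσ
      omega
    have hB : ∀ i ≤ D, ∑ l ∈ Finset.range (i + 1), b l = 0 := fun i hi =>
      hi.lt_or_eq.elim (fun h => neg_eq_zero.1 (ih hrank i h)) (· ▸ hb)
    intro i hi
    exact (mul_eq_zero.1 (eq_zero_of_sum_range_succ_eq_zero hB i (by omega))).resolve_right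
      ((map_ne_zero (σ ^ i)).2 hy0)

theorem coeff_eq_of_sigmaPoly_apply_eq (hσ : AlgHom.equalizer σ (.id F K) = ⊥) {n : ℕ}
    {α : Fin n → K} (hα : LinearIndependent F α) {a b : ℕ → K}
    (h : ∀ l, sigmaPoly σ n a (α l) = sigmaPoly σ n b (α l)) : ∀ i < n, a i = b i := by
  have hker : Submodule.span F (Set.range α) ≤ LinearMap.ker (sigmaPoly σ n (a - b)) := by
    rw [Submodule.span_le]
    rintro _ ⟨l, rfl⟩
    rw [SetLike.mem_coe, LinearMap.mem_ker, sigmaPoly_sub, LinearMap.sub_apply, h, sub_self]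
  have hn : n ≤ finrank F (LinearMap.ker (sigmaPoly σ n (a - b))) := by
    simpa [finrank_span_eq_card hα] using Submodule.finrank_mono hker
  exact fun i hi => sub_eq_zero.1 (coeff_eq_zero_of_le_finrank_ker hσ hn i hi)

theorem finrank_ker_aeval_le_natDegree (hσ : AlgHom.equalizer σ (.id F K) = ⊥) {G : F[X]}
    (hG : G ≠ 0) : finrank F (LinearMap.ker (aeval σ.toLinearMap G)) ≤ G.natDegree := by
  by_contra! h
  rw [aeval_toLinearMap_eq_sigmaPoly σ G.natDegree.lt_succ_self] at h
  have hlead := coeff_eq_zero_of_le_finrank_ker hσ h G.natDegree G.natDegree.lt_succ_self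
  exact hG (by simpa using hlead)

end SigmaPolynomials

section AddXPow

variable {R : Type*} [Semiring R] {g : R[X]} {N : ℕ}

theorem natDegree_add_X_pow [Nontrivial R] (hgN : g.natDegree < N) :
    (g + X ^ N).natDegree = N := by
  rw [natDegree_add_eq_right_of_natDegree_lt (by rwa [natDegree_X_pow]), natDegree_X_pow]

theorem coeff_zero_add_X_pow (hN : N ≠ 0) : (g + X ^ N).coeff 0 = g.coeff 0 := by
  rw [coeff_add, coeff_X_pow, if_neg hN.symm, add_zero]

end AddXPow

section Twist

variable {F K : Type*} [Field F] [Field K] [Algebra F K]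

/-- The map `x ↦ σ ^ N (u)⁻¹ • g(σ)(u x)`: the `σ`-polynomial of `g ∈ F[X]` conjugated by
multiplication by `u`, normalised so that the term `X ^ N` of `g` gives `σ ^ N`, independently of
`u`. -/
noncomputable def twist (σ : K →ₐ[F] K) (N : ℕ) (g : F[X]) (u : K) : K →ₗ[F] K :=
  LinearMap.mulLeft F ((σ ^ N) u)⁻¹ ∘ₗ aeval σ.toLinearMap g ∘ₗ LinearMap.mulLeft F u

theorem twist_apply (σ : K →ₐ[F] K) (N : ℕ) (g : F[X]) (u x : K) :
    twist σ N g u x = ((σ ^ N) u)⁻¹ * aeval σ.toLinearMap g (u * x) := rfl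

theorem twist_add_X_pow (σ : K →ₐ[F] K) (N : ℕ) (g : F[X]) {u : K} (hu : u ≠ 0) (x : K) :
    twist σ N (g + X ^ N) u x = twist σ N g u x + (σ ^ N) x := by
  have hσu : (σ ^ N) u ≠ 0 := (map_ne_zero (σ ^ N)).2 hu
  rw [twist_apply, twist_apply, map_add, map_pow, aeval_X, LinearMap.add_apply,
    toLinearMap_pow_apply, mul_add, map_mul (σ ^ N), inv_mul_cancel_left₀ hσu]

theorem twist_eq_sigmaPoly (σ : K →ₐ[F] K) (N : ℕ) {g : F[X]} {D : ℕ} (hg : g.natDegree < D)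
    (u : K) :
    twist σ N g u = sigmaPoly σ D fun i =>
      ((σ ^ N) u)⁻¹ * (algebraMap F K (g.coeff i) * (σ ^ i) u) := by
  ext x
  rw [twist_apply, aeval_toLinearMap_eq_sigmaPoly σ hg, sigmaPoly_apply, sigmaPoly_apply,
    Finset.mul_sum]
  simp only [map_mul, mul_assoc]

theorem aeval_apply_mem_ker_aeval {V : Type*} [AddCommGroup V] [Module F V] (φ : V →ₗ[F] V)
    {f G P : F[X]} (hG : f * G = P) {x : V} (hx : aeval φ P x = 0) :
    aeval φ f x ∈ LinearMap.ker (aeval φ G) := by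
  rw [LinearMap.mem_ker, ← End.mul_apply, ← map_mul, mul_comm, hG, hx]

variable [FiniteDimensional F K] {σ : K →ₐ[F] K} {n : ℕ} {α : Fin n → K}

theorem pow_apply_div_eq_self_of_twist_eq (hσ : AlgHom.equalizer σ (.id F K) = ⊥)
    (hα : LinearIndependent F α) {N : ℕ} {g : F[X]} (hg : g.natDegree < n) (hg0 : g.coeff 0 ≠ 0)
    {u v : K} (hu : u ≠ 0) (hv : v ≠ 0)
    (h : ∀ l, twist σ N g u (α l) = twist σ N g v (α l)) {i : ℕ} (hi : g.coeff i ≠ 0) :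
    (σ ^ i) (u / v) = u / v := by
  have hratio {i : ℕ} (hi : g.coeff i ≠ 0) : (σ ^ i) (u / v) = (σ ^ N) (u / v) := by
    simp_rw [twist_eq_sigmaPoly σ N hg] at h
    have hcoeff := coeff_eq_of_sigmaPoly_apply_eq hσ hα h i
      ((le_natDegree_of_ne_zero hi).trans_lt hg)
    have hci : algebraMap F K (g.coeff i) ≠ 0 := (map_ne_zero _).2 hi
    have hNu : (σ ^ N) u ≠ 0 := (map_ne_zero _).2 hu
    have hNv : (σ ^ N) v ≠ 0 := (map_ne_zero _).2 hv
    have hiv : (σ ^ i) v ≠ 0 := (map_ne_zero _).2 hv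
    rw [map_div₀, map_div₀, div_eq_div_iff hiv hNv]
    field_simp at hcoeff
    linear_combination hcoeff
  rw [hratio hi, ← hratio hg0, pow_zero, AlgHom.one_apply]

theorem exists_twist_apply_ne_zero (hσ : AlgHom.equalizer σ (.id F K) = ⊥)
    (hα : LinearIndependent F α) (N : ℕ) {g : F[X]} (hg : g.natDegree < n) (hg0 : g.coeff 0 ≠ 0)
    {u : K} (hu : u ≠ 0) :
    ∃ l, twist σ N g u (α l) ≠ 0 := by
  by_contra! h
  simp_rw [twist_eq_sigmaPoly σ N hg] at h
  have hzero : ∀ l, sigmaPoly σ n (0 : ℕ → K) (α l) = 0 := fun l => by simp [sigmaPoly_apply]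
  have hcoeff := coeff_eq_of_sigmaPoly_apply_eq hσ hα (fun l => (h l).trans (hzero l).symm) 0
    (Nat.zero_lt_of_lt hg)
  exact mul_ne_zero (inv_ne_zero ((map_ne_zero (σ ^ N)).2 hu))
    (mul_ne_zero ((map_ne_zero _).2 hg0) ((map_ne_zero (σ ^ 0)).2 hu)) hcoeff

end Twist

section RankWeight

theorem rkw_comp_le {F K : Type} [Field F] [Field K] [Algebra F K] {V : Type*} [AddCommGroup V]
    [Module F V] (φ : V →ₗ[F] K) {W : Submodule F V} [FiniteDimensional F W] {n : ℕ}
    {v : Fin n → V} (hv : ∀ l, v l ∈ W) : rkw F (φ ∘ v) ≤ finrank F W := by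
  refine (Submodule.finrank_mono ?_).trans (Submodule.finrank_map_le φ W)
  rw [Submodule.span_le]
  rintro _ ⟨l, rfl⟩
  exact Submodule.mem_map_of_mem (hv l)

theorem notMem_of_rkw_sub_lt_minDist {F K : Type} [Field F] [Field K] [Algebra F K] {n : ℕ}
    {C : Set (Fin n → K)} {w c : Fin n → K} (hc : c ∈ C) (hne : w ≠ c)
    (h : rkw F (w - c) < minDist F C) : w ∉ C := fun hw =>
  h.not_ge (Nat.sInf_le ⟨w, hw, c, hc, hne, rfl⟩)

end RankWeight

theorem ncard_div_le_ncard_image {K V : Type*} [Field K] {N : ℕ} {s W : Set K} (hs : s.Finite)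
    (hs0 : ∀ u ∈ s, u ≠ 0) (hW : W.Finite) (hW0 : 0 ∈ W) (hWN : W.ncard ≤ N) {c : K → V}
    (hc : ∀ u ∈ s, ∀ v ∈ s, c u = c v → u / v ∈ W) :
    s.ncard / (N - 1) ≤ (c '' s).ncard := by
  classical
  lift s to Finset K using hs
  rw [← Finset.coe_image, Set.ncard_coe_finset, Set.ncard_coe_finset]
  refine Nat.div_le_of_le_mul (Finset.card_le_mul_card_image s (N - 1) fun b hb => ?_)
  obtain ⟨v, hv, rfl⟩ := Finset.mem_image.1 hb
  let fiber : Finset K := {u ∈ s | c u = c v}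
  have hmem : Set.MapsTo (· / v) fiber (W \ {0}) := fun u hu => by
    obtain ⟨hus, huv⟩ := Finset.mem_filter.1 hu
    exact ⟨hc u hus v hv huv, div_ne_zero (hs0 u hus) (hs0 v hv)⟩
  have hinj : Set.InjOn (· / v) (fiber : Set K) :=
    fun u _ u' _ h => (div_left_inj' (hs0 v hv)).1 h
  calc fiber.card = (fiber : Set K).ncard := (Set.ncard_coe_finset fiber).symm
    _ ≤ (W \ {0}).ncard := Set.ncard_le_ncard_of_injOn _ hmem hinj (hW.subset Set.sdiff_subset)
    _ = W.ncard - 1 := Set.ncard_sdiff_singleton_of_mem hW0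
    _ ≤ N - 1 := Nat.sub_le_sub_right hWN 1

section Multipliers

variable {F K : Type*} [Field F] [Field K] [Algebra F K] {n : ℕ}

/-- The multipliers `u ≠ 0` that carry the evaluation points `α_l` into the fixed field of
`σ ^ n`; if the `α_l` lie in `β L`, where `L` is that field, these include `β⁻¹ L \ {0}`. They
index the codewords close to the received word. -/
def multipliers (σ : K →ₐ[F] K) (α : Fin n → K) : Set K :=
  {u | u ≠ 0 ∧ ∀ l, (σ ^ n) (u * α l) = u * α l}

variable {σ : K →ₐ[F] K} {α : Fin n → K}

theorem pow_apply_mem_multipliers {u : K} (hu : u ∈ multipliers σ α) (j : ℕ) :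
    (σ ^ j) u ∈ multipliers σ ((σ ^ j) ∘ α) := by
  refine ⟨(map_ne_zero (σ ^ j)).2 hu.1, fun l => ?_⟩
  rw [Function.comp_apply, ← map_mul, ← AlgHom.mul_apply, pow_mul_comm, AlgHom.mul_apply, hu.2]

theorem card_pow_sub_one_le_ncard_multipliers [Finite K] (hα : LinearIndependent F α)
    (hU : (multipliers σ α).Nonempty) :
    Nat.card F ^ n - 1 ≤ (multipliers σ α).ncard := by
  obtain ⟨γ, hγ0, hγ⟩ := hU
  let V := Submodule.span F (Set.range α)
  have hfix : ∀ x ∈ V, (σ ^ n) (γ * x) = γ * x := by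
    have hEq : Set.EqOn ((σ ^ n).toLinearMap ∘ₗ LinearMap.mulLeft F γ) (LinearMap.mulLeft F γ)
        (Submodule.span F (Set.range α)) :=
      LinearMap.eqOn_span (by rintro _ ⟨l, rfl⟩; exact hγ l)
    exact fun x hx => hEq hx
  have hmem : Set.MapsTo (fun x => γ * x * γ) ((V : Set K) \ {0}) (multipliers σ α) := by
    rintro x ⟨hxV, hx0⟩
    refine ⟨mul_ne_zero (mul_ne_zero hγ0 hx0) hγ0, fun l => ?_⟩
    rw [mul_assoc (γ * x), map_mul, hfix x hxV, hγ]
  have hinj : Set.InjOn (fun x => γ * x * γ) ((V : Set K) \ {0}) := fun x _ y _ hxy =>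
    mul_left_cancel₀ hγ0 (mul_right_cancel₀ hγ0 hxy)
  have hcard : (V : Set K).ncard = Nat.card F ^ n := by
    rw [← Nat.card_coe_set_eq, SetLike.coe_sort_coe, natCard_eq_pow_finrank (K := F),
      finrank_span_eq_card hα, Fintype.card_fin]
  calc Nat.card F ^ n - 1 = ((V : Set K) \ {0}).ncard := by
        rw [Set.ncard_sdiff_singleton_of_mem V.zero_mem, hcard]
    _ ≤ (multipliers σ α).ncard := Set.ncard_le_ncard_of_injOn _ hmem hinj

theorem ncard_setOf_pow_apply_eq_self_le [Finite K] (hσ : AlgHom.equalizer σ (.id F K) = ⊥)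
    {t : ℕ} (ht : 0 < t) : {z : K | (σ ^ t) z = z}.ncard ≤ Nat.card F ^ t := by
  have : Finite F := Finite.of_injective _ (algebraMap F K).injective
  have hdeg : (X ^ t - 1 : F[X]).natDegree = t := by
    simpa using natDegree_X_pow_sub_C (n := t) (r := (1 : F))
  have hker : {z : K | (σ ^ t) z = z} = LinearMap.ker (aeval σ.toLinearMap (X ^ t - 1 : F[X])) := by
    ext z
    simp [toLinearMap_pow_apply, sub_eq_zero]
  rw [hker, ← Nat.card_coe_set_eq, SetLike.coe_sort_coe, natCard_eq_pow_finrank (K := F)]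
  refine Nat.pow_le_pow_right Nat.card_pos ?_
  exact (finrank_ker_aeval_le_natDegree hσ (ne_zero_of_natDegree_gt (hdeg ▸ ht))).trans_eq hdeg

end Multipliers

section NearbyCodewords

variable {F K : Type} [Field F] [Field K] [Algebra F K] {n : ℕ}

/-- The codeword attached to the multiplier `u`, close to the word `σ ^ N ∘ α`. It belongs to every
code containing the evaluations of all `σ`-polynomials with at least as many terms as `g`. -/
noncomputable def nearbyCodeword (σ : K →ₐ[F] K) (N : ℕ) (g : F[X]) (α : Fin n → K) (u : K) :
    Fin n → K :=
  -(twist σ N g u ∘ α)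

theorem pow_comp_sub_nearbyCodeword (σ : K →ₐ[F] K) (N : ℕ) (g : F[X]) (α : Fin n → K) {u : K}
    (hu : u ≠ 0) :
    (σ ^ N) ∘ α - nearbyCodeword σ N g α u = twist σ N (g + X ^ N) u ∘ α := by
  ext l
  simp [nearbyCodeword, twist_add_X_pow σ N g hu, add_comm]

theorem exists_nearbyCodeword_eq_sigmaPoly_comp (σ : K →ₐ[F] K) (N : ℕ) {g : F[X]} {D : ℕ}
    (hg : g.natDegree < D) (α : Fin n → K) (u : K) :
    ∃ a, nearbyCodeword σ N g α u = sigmaPoly σ D a ∘ α := by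
  refine ⟨-fun i => ((σ ^ N) u)⁻¹ * (algebraMap F K (g.coeff i) * (σ ^ i) u), ?_⟩
  ext l
  simp [nearbyCodeword, twist_eq_sigmaPoly σ N hg, sigmaPoly_apply]

variable {σ : K →ₐ[F] K} {α : Fin n → K} {N : ℕ} {g : F[X]}

theorem rkw_twist_comp_le [FiniteDimensional F K] (hσ : AlgHom.equalizer σ (.id F K) = ⊥)
    {f : F[X]} (hn : 0 < n) (hf : f ∣ X ^ n - 1) (N : ℕ) {u : K} (hu : u ∈ multipliers σ α) :
    rkw F (twist σ N f u ∘ α) ≤ n - f.natDegree := by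
  obtain ⟨G, hG⟩ := hf
  have hne : (X ^ n - 1 : F[X]) ≠ 0 := by simpa using X_pow_sub_C_ne_zero hn (1 : F)
  have hdeg : (X ^ n - 1 : F[X]).natDegree = n := by
    simpa using natDegree_X_pow_sub_C (n := n) (r := (1 : F))
  rw [hG] at hne
  rw [hG, natDegree_mul (left_ne_zero_of_mul hne) (right_ne_zero_of_mul hne)] at hdeg
  have hker (l : Fin n) : aeval σ.toLinearMap f (u * α l) ∈
      LinearMap.ker (aeval σ.toLinearMap G) :=
    aeval_apply_mem_ker_aeval _ hG.symm (by simp [toLinearMap_pow_apply, hu.2 l])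
  calc rkw F (twist σ N f u ∘ α)
      ≤ finrank F (LinearMap.ker (aeval σ.toLinearMap G)) :=
        rkw_comp_le (LinearMap.mulLeft F ((σ ^ N) u)⁻¹) hker
    _ ≤ G.natDegree := finrank_ker_aeval_le_natDegree hσ (right_ne_zero_of_mul hne)
    _ = n - f.natDegree := by omega

theorem rkw_pow_comp_sub_nearbyCodeword_le [FiniteDimensional F K]
    (hσ : AlgHom.equalizer σ (.id F K) = ⊥) (hn : 0 < n) (hgN : g.natDegree < N)
    (hdvd : g + X ^ N ∣ X ^ n - 1) {u : K} (hu : u ∈ multipliers σ α) :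
    rkw F ((σ ^ N) ∘ α - nearbyCodeword σ N g α u) ≤ n - N := by
  rw [pow_comp_sub_nearbyCodeword σ N g α hu.1]
  simpa only [natDegree_add_X_pow hgN] using rkw_twist_comp_le hσ hn hdvd N hu

theorem pow_comp_notMem [FiniteDimensional F K] (hσ : AlgHom.equalizer σ (.id F K) = ⊥)
    (hα : LinearIndependent F α) (hN : N < n) (hgN : g.natDegree < N) (hg0 : g.coeff 0 ≠ 0)
    (hdvd : g + X ^ N ∣ X ^ n - 1) {C : Set (Fin n → K)} (hd : n - N < minDist F C) {u : K}
    (hu : u ∈ multipliers σ α) (huC : nearbyCodeword σ N g α u ∈ C) : (σ ^ N) ∘ α ∉ C := by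
  have hdist := rkw_pow_comp_sub_nearbyCodeword_le hσ (Nat.zero_lt_of_lt hN) hgN hdvd hu
  refine notMem_of_rkw_sub_lt_minDist huC (fun hw => ?_) (hdist.trans_lt hd)
  obtain ⟨l, hl⟩ := exists_twist_apply_ne_zero hσ hα N ((natDegree_add_X_pow hgN).trans_lt hN)
    (by rwa [coeff_zero_add_X_pow (Nat.zero_lt_of_lt hgN).ne']) hu.1
  exact hl (congrFun ((pow_comp_sub_nearbyCodeword σ N g α hu.1).symm.trans (sub_eq_zero.2 hw)) l)

theorem pow_apply_div_eq_self_of_nearbyCodeword_eq [FiniteDimensional F K]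
    (hσ : AlgHom.equalizer σ (.id F K) = ⊥) (hα : LinearIndependent F α) (hN : N < n)
    (hgN : g.natDegree < N) (hg0 : g.coeff 0 ≠ 0) {u v : K} (hu : u ≠ 0) (hv : v ≠ 0)
    (huv : nearbyCodeword σ N g α u = nearbyCodeword σ N g α v) {i : ℕ}
    (hi : (g + X ^ N).coeff i ≠ 0) : (σ ^ i) (u / v) = u / v := by
  have htwist : twist σ N (g + X ^ N) u ∘ α = twist σ N (g + X ^ N) v ∘ α := by
    rw [← pow_comp_sub_nearbyCodeword σ N g α hu, huv, pow_comp_sub_nearbyCodeword σ N g α hv]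
  exact pow_apply_div_eq_self_of_twist_eq hσ hα ((natDegree_add_X_pow hgN).trans_lt hN)
    (by rwa [coeff_zero_add_X_pow (Nat.zero_lt_of_lt hgN).ne']) hu hv (congrFun htwist) hi

theorem exists_notMem_le_ncard_inter_ball_of_dvd [Finite K]
    (hσ : AlgHom.equalizer σ (.id F K) = ⊥) (hα : LinearIndependent F α)
    (hU : (multipliers σ α).Nonempty) (hN : N < n) (hgN : g.natDegree < N) (hg0 : g.coeff 0 ≠ 0)
    (hdvd : g + X ^ N ∣ X ^ n - 1) {t : ℕ} (ht : 0 < t) (hgt : (g + X ^ N).coeff t ≠ 0)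
    {D : ℕ} (hD : g.natDegree < D) {C : Set (Fin n → K)} (hC : ∀ a, sigmaPoly σ D a ∘ α ∈ C)
    (hd : n - N < minDist F C) :
    ∃ w ∉ C, (Nat.card F ^ n - 1) / (Nat.card F ^ t - 1) ≤ (C ∩ ball F w (n - N)).ncard := by
  have hmem (u : K) : nearbyCodeword σ N g α u ∈ C := by
    obtain ⟨a, ha⟩ := exists_nearbyCodeword_eq_sigmaPoly_comp σ N hD α u
    exact ha ▸ hC a
  have himage : nearbyCodeword σ N g α '' multipliers σ α ⊆ C ∩ ball F ((σ ^ N) ∘ α) (n - N) := by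
    rintro _ ⟨u, hu, rfl⟩
    exact ⟨hmem u, rkw_pow_comp_sub_nearbyCodeword_le hσ (Nat.zero_lt_of_lt hN) hgN hdvd hu⟩
  obtain ⟨u₀, hu₀⟩ := hU
  refine ⟨(σ ^ N) ∘ α, pow_comp_notMem hσ hα hN hgN hg0 hdvd hd hu₀ (hmem u₀), ?_⟩
  calc (Nat.card F ^ n - 1) / (Nat.card F ^ t - 1)
      ≤ (multipliers σ α).ncard / (Nat.card F ^ t - 1) :=
        Nat.div_le_div_right (card_pow_sub_one_le_ncard_multipliers hα ⟨u₀, hu₀⟩)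
    _ ≤ (nearbyCodeword σ N g α '' multipliers σ α).ncard :=
        ncard_div_le_ncard_image (W := {z | (σ ^ t) z = z}) (Set.toFinite _) (fun u hu => hu.1)
          (Set.toFinite _) (map_zero (σ ^ t)) (ncard_setOf_pow_apply_eq_self_le hσ ht)
          fun u hu v hv huv => pow_apply_div_eq_self_of_nearbyCodeword_eq hσ hα hN hgN hg0
            hu.1 hv.1 huv hgt
    _ ≤ (C ∩ ball F ((σ ^ N) ∘ α) (n - N)).ncard := Set.ncard_le_ncard himage

end NearbyCodewords

section Repunit

/-- The number `t p_{k - 1} = t (1 + Q + ⋯ + Q ^ (k - 1))`. -/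
def scaledRepunit (t Q k : ℕ) : ℕ := t * ∑ i ∈ Finset.range k, Q ^ i

theorem scaledRepunit_zero (t Q : ℕ) : scaledRepunit t Q 0 = 0 := by simp [scaledRepunit]

theorem scaledRepunit_one (t Q : ℕ) : scaledRepunit t Q 1 = t := by simp [scaledRepunit]

theorem scaledRepunit_succ (t Q k : ℕ) :
    scaledRepunit t Q (k + 1) = scaledRepunit t Q k + t * Q ^ k := by
  rw [scaledRepunit, Finset.sum_range_succ, mul_add, scaledRepunit]

theorem scaledRepunit_succ' (t Q k : ℕ) :
    scaledRepunit t Q (k + 1) = t + scaledRepunit t Q k * Q := by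
  rw [scaledRepunit, geom_sum_succ, scaledRepunit]
  ring

theorem strictMono_scaledRepunit {t Q : ℕ} (ht : 0 < t) (hQ : 0 < Q) :
    StrictMono (scaledRepunit t Q) :=
  strictMono_nat_of_lt_succ fun k => by
    rw [scaledRepunit_succ]
    exact Nat.lt_add_of_pos_right (Nat.mul_pos ht (Nat.pow_pos hQ))

/-- The polynomial `∑_{l < k} X ^ (t p_{l - 1})`, which divides `X ^ (t p_{k - 1}) - 1` when `Q` is
a power of the characteristic. -/
noncomputable def repunitPoly (R : Type*) [Semiring R] (t Q k : ℕ) : R[X] :=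
  ∑ l ∈ Finset.range k, X ^ scaledRepunit t Q l

section Semiring

variable (R : Type*) [Semiring R]

theorem repunitPoly_succ (t Q k : ℕ) :
    repunitPoly R t Q (k + 1) = repunitPoly R t Q k + X ^ scaledRepunit t Q k :=
  Finset.sum_range_succ _ _

theorem natDegree_repunitPoly_le {t Q : ℕ} (ht : 0 < t) (hQ : 0 < Q) (k : ℕ) :
    (repunitPoly R t Q k).natDegree ≤ scaledRepunit t Q (k - 1) :=
  natDegree_sum_le_of_forall_le _ _ fun l hl => by
    have hle := (strictMono_scaledRepunit ht hQ).monotone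
      (Nat.le_sub_one_of_lt (Finset.mem_range.1 hl))
    exact (natDegree_X_pow_le _).trans hle

theorem coeff_repunitPoly_scaledRepunit {t Q k l : ℕ} (ht : 0 < t) (hQ : 0 < Q) (hl : l < k) :
    (repunitPoly R t Q k).coeff (scaledRepunit t Q l) = 1 := by
  simp [repunitPoly, coeff_X_pow, (strictMono_scaledRepunit ht hQ).injective.eq_iff, hl]

end Semiring

theorem X_pow_mul_repunitPoly_pow (R : Type*) [CommSemiring R] (p r t k : ℕ)
    [ExpChar R p] :
    X ^ t * repunitPoly R t (p ^ r) k ^ p ^ r + 1 = repunitPoly R t (p ^ r) (k + 1) := by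
  rw [repunitPoly, repunitPoly, sum_pow_char_pow, Finset.sum_range_succ', Finset.mul_sum,
    scaledRepunit_zero, pow_zero]
  simp only [← pow_mul, ← pow_add, scaledRepunit_succ']

theorem repunitPoly_dvd_X_pow_sub_one (R : Type*) [CommRing R] (p r t k : ℕ)
    [ExpChar R p] :
    repunitPoly R t (p ^ r) k ∣ X ^ scaledRepunit t (p ^ r) k - 1 := by
  refine ⟨X ^ t * repunitPoly R t (p ^ r) k ^ (p ^ r - 1) - 1, ?_⟩
  have hpow := pow_sub_one_mul (Nat.pow_pos (expChar_pos R p) : 0 < p ^ r).ne'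
    (repunitPoly R t (p ^ r) k)
  have hfrob := X_pow_mul_repunitPoly_pow R p r t k
  rw [repunitPoly_succ] at hfrob
  linear_combination -hfrob - X ^ t * hpow

theorem exists_notMem_le_ncard_inter_ball {p r n t k : ℕ} {F K : Type} [Field F] [Field K]
    [Finite K] [Algebra F K] [ExpChar F p] {σ : K →ₐ[F] K}
    (hσ : AlgHom.equalizer σ (.id F K) = ⊥) (ht : 0 < t) (hk : 1 ≤ k)
    (hn : n = scaledRepunit t (p ^ r) (k + 1)) {α : Fin n → K} (hα : LinearIndependent F α)
    (hU : (multipliers σ α).Nonempty) {C : Set (Fin n → K)}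
    (hC : ∀ a, sigmaPoly σ (scaledRepunit t (p ^ r) (k - 1) + 1) a ∘ α ∈ C)
    (hd : t * (p ^ r) ^ k < minDist F C) :
    ∃ w ∉ C, (Nat.card F ^ n - 1) / (Nat.card F ^ t - 1) ≤
      (C ∩ ball F w (t * (p ^ r) ^ k)).ncard := by
  have hQ : 0 < p ^ r := Nat.pow_pos (expChar_pos F p)
  have hmono := strictMono_scaledRepunit ht hQ
  have hdeg := natDegree_repunitPoly_le F ht hQ k
  have hcoeff_zero : (repunitPoly F t (p ^ r) k).coeff 0 = 1 := by
    simpa only [scaledRepunit_zero] using coeff_repunitPoly_scaledRepunit F ht hQ hk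
  have hcoeff_t : (repunitPoly F t (p ^ r) (k + 1)).coeff t = 1 := by
    simpa only [scaledRepunit_one] using
      coeff_repunitPoly_scaledRepunit F ht hQ (Nat.lt_add_of_pos_left hk : 1 < k + 1)
  have hdvd := repunitPoly_dvd_X_pow_sub_one F p r t (k + 1)
  have hradius : n - scaledRepunit t (p ^ r) k = t * (p ^ r) ^ k := by
    rw [hn, scaledRepunit_succ, Nat.add_sub_cancel_left]
  rw [repunitPoly_succ, ← hn] at hdvd
  rw [repunitPoly_succ] at hcoeff_t
  rw [← hradius] at hd ⊢
  exact exists_notMem_le_ncard_inter_ball_of_dvd hσ hα hU (hn ▸ hmono k.lt_succ_self)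
    (hdeg.trans_lt (hmono (by omega))) (hcoeff_zero ▸ one_ne_zero) hdvd ht
    (hcoeff_t ▸ one_ne_zero) (Nat.lt_succ_of_le hdeg) hC hd

end Repunit

open FiniteField (frobeniusAlgHom)

section FiniteFields

variable {F K : Type*} [Field F] [Field K] [Algebra F K] [Fintype F]

theorem frobeniusAlgHom_pow_apply (i : ℕ) (x : K) :
    (frobeniusAlgHom F K ^ i) x = x ^ Fintype.card F ^ i := by
  rw [AlgHom.coe_pow, FiniteField.coe_frobeniusAlgHom, pow_iterate]

theorem frobeniusAlgHom_pow_pow_apply_eq_self {n : ℕ} {x : K} (hx : x ^ Fintype.card F ^ n = x)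
    (s : ℕ) : ((frobeniusAlgHom F K ^ s) ^ n) x = x := by
  rw [← frobeniusAlgHom_pow_apply, AlgHom.coe_pow] at hx
  rw [← pow_mul, AlgHom.coe_pow]
  exact Function.IsPeriodicPt.const_mul hx s

theorem equalizer_frobeniusAlgHom_pow_eq_bot [Finite K] {s : ℕ} (hs : s.Coprime (finrank F K)) :
    AlgHom.equalizer (frobeniusAlgHom F K ^ s) (.id F K) = ⊥ := by
  refine eq_bot_iff.2 fun x hx => ?_
  have hxs : Function.IsPeriodicPt (frobeniusAlgHom F K) s x := by
    rw [Function.IsPeriodicPt, ← AlgHom.coe_pow]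
    exact hx
  have hxm : Function.IsPeriodicPt (frobeniusAlgHom F K) (finrank F K) x := by
    rw [Function.IsPeriodicPt, ← AlgHom.coe_pow, ← FiniteField.orderOf_frobeniusAlgHom,
      pow_orderOf_eq_one]
    rfl
  have hfrob : Function.IsPeriodicPt (frobeniusAlgHom F K) 1 x := by
    simpa only [hs.gcd_eq_one] using hxs.gcd hxm
  refine Algebra.mem_bot.2 ((IsGalois.mem_range_algebraMap_iff_fixed x).2 fun τ => ?_)
  obtain ⟨i, rfl⟩ := (FiniteField.bijective_frobeniusAlgEquivOfAlgebraic_pow F K).2 τ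
  change ((FiniteField.frobeniusAlgEquivOfAlgebraic F K) ^ (i : ℕ)) x = x
  rw [AlgEquiv.coe_pow]
  exact Function.iterate_fixed hfrob i

theorem sigmaPoly_frobeniusAlgHom_pow_comp (s j D : ℕ) (a : ℕ → K) (x : K) :
    sigmaPoly (frobeniusAlgHom F K ^ s) D a (((frobeniusAlgHom F K ^ s) ^ j) x) =
      ∑ i : Fin D, a i * x ^ (Fintype.card F ^ s) ^ (j + i) := by
  rw [sigmaPoly_apply, Finset.sum_range]
  refine Finset.sum_congr rfl fun i _ => ?_
  rw [← AlgHom.mul_apply, ← pow_add, add_comm, ← pow_mul, frobeniusAlgHom_pow_apply, pow_mul]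

end FiniteFields

theorem stmt_16_general {p q Q r s n t k j : ℕ} {F K : Type} [Field F] [Fintype F] [Field K]
    [Finite K] [Algebra F K] [ExpChar F p] (hq : Fintype.card F = q) (hQ : Q = p ^ r)
    (ht : 0 < t) (hk : 1 ≤ k) (hn : n = t * ∑ i ∈ Finset.range (k + 1), Q ^ i)
    (hs : s.Coprime (finrank F K)) {β : K} (hβ : β ≠ 0) {α : Fin n → K}
    (hα : LinearIndependent F α)
    (hαβ : ∀ l, α l ∈ (fun y : K => β * y) '' {x : K | x ^ q ^ n = x})
    {C : Set (Fin n → K)}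
    (hC : ∀ a : Fin (t * (∑ i ∈ Finset.range (k - 1), Q ^ i) + 1) → K,
      (fun l => ∑ i, a i * α l ^ (q ^ s) ^ (j + (i : ℕ))) ∈ C)
    (hd : t * Q ^ k < minDist F C) :
    ∃ w ∉ C, (q ^ n - 1) / (q ^ t - 1) ≤ (C ∩ ball F w (t * Q ^ k)).ncard := by
  subst hq hQ
  let σ := frobeniusAlgHom F K ^ s
  have hα' : LinearIndependent F ((σ ^ j) ∘ α) :=
    hα.map' (σ ^ j).toLinearMap (LinearMap.ker_eq_bot.2 (σ ^ j).toRingHom.injective)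
  have hU : β⁻¹ ∈ multipliers σ α := by
    refine ⟨inv_ne_zero hβ, fun l => ?_⟩
    obtain ⟨x, hx, hxl⟩ := hαβ l
    rw [← hxl, inv_mul_cancel_left₀ hβ]
    exact frobeniusAlgHom_pow_pow_apply_eq_self hx s
  have hC' (a : ℕ → K) : sigmaPoly σ (scaledRepunit t (p ^ r) (k - 1) + 1) a ∘ (σ ^ j) ∘ α ∈ C := by
    convert hC fun i => a i using 2 with l
    exact sigmaPoly_frobeniusAlgHom_pow_comp s j _ a (α l)
  rw [← Nat.card_eq_fintype_card]
  exact exists_notMem_le_ncard_inter_ball (equalizer_frobeniusAlgHom_pow_eq_bot hs) ht hk hn hα'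
    ⟨_, pow_apply_mem_multipliers hU j⟩ hC' hd

/-- with `q' = p^r`, `p_i = 1 + q' + ⋯ + q'^i`, `n = t·p_k` (`k ≥ 2`), if
`(𝒢_{n,t·p_{k−2}+1,σ})^{σ^j} ⊆ 𝒞` for some `j < t·q'^k`, and
`⌊(d−1)/2⌋+1 ≤ t·q'^k ≤ d−1`, then there is a word `w ∉ C` with
`|C ∩ B_{t·q'^k}(w)| ≥ (q^n−1)/(q^t−1)`. -/
theorem stmt_16 (p q qp r s n m t k j : ℕ) (Fq K : Type) [Field Fq] [Fintype Fq] [Field K]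
    [Fintype K] [Algebra Fq K]
    (hp : p.Prime) (hpe : ∃ e : ℕ, 0 < e ∧ q = p ^ e) (hqp : qp = p ^ r)
    (ht0 : 0 < t) (hk2 : 2 ≤ k)
    (hnval : n = t * ∑ jj ∈ Finset.range (k + 1), qp ^ jj)
    (hcard : Fintype.card Fq = q) (hfin : Module.finrank Fq K = m)
    (hn : 0 < n) (hnm : n ∣ m) (hs : Nat.gcd s m = 1)
    (𝒞 : Set (K → K))
    (hlin : ∀ f ∈ 𝒞, ∃ N : ℕ, ∃ a : Fin N → K, ∀ x : K,
      f x = ∑ i : Fin N, a i * x ^ ((q ^ s) ^ (i : ℕ)))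
    (β : K) (hβ : β ≠ 0)
    (α : Fin n → K) (hα : LinearIndependent Fq α)
    (hspan : (Submodule.span Fq (Set.range α) : Set K)
      = (fun y : K => β * y) '' {x : K | x ^ q ^ n = x})
    (C : Set (Fin n → K)) (hC : C = (fun g : K → K => fun i : Fin n => g (α i)) '' 𝒞)
    (d : ℕ) (hd : d = minDist Fq C)
    (hb1 : (d - 1) / 2 + 1 ≤ t * qp ^ k)
    (hb2 : ((t * qp ^ k : ℕ) : ℤ) ≤ (d : ℤ) - 1)
    (hj : j < t * qp ^ k)
    (hGab : {f : K → K |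
        ∃ a : Fin (t * (∑ jj ∈ Finset.range (k - 1), qp ^ jj) + 1) → K, ∀ x : K,
          f x = ∑ i, a i * x ^ ((q ^ s) ^ (j + (i : ℕ)))} ⊆ 𝒞) :
    ∃ w : Fin n → K, w ∉ C ∧
      (q ^ n - 1) / (q ^ t - 1) ≤ Nat.card ↥(C ∩ ball Fq w (t * qp ^ k)) := by
  obtain ⟨e, -, hqe⟩ := hpe
  have : Fact p.Prime := ⟨hp⟩
  have : CharP Fq p := charP_of_card_eq_prime_pow (hcard.trans hqe)
  have hcode := fun a => hC ▸ Set.mem_image_of_mem _ (hGab ⟨a, fun _ => rfl⟩)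
  simp only [Nat.card_coe_set_eq]
  exact stmt_16_general hcard hqp ht0 (by omega) hnval (hfin ▸ hs) hβ hα
    (fun l => hspan ▸ Submodule.subset_span (Set.mem_range_self l)) hcode (by omega)
end
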